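/- arXiv:2102.06555 — 2 statements merged into one kernel-verified Lean document; each statement's English description precedes it below -/
import Mathlib

section
/- Let C̄_1, …, C̄_S be symmetric matrices in ℝ^{N×N}, let h ∈ Σ_N, D_h = diag(h), M ∈ ℝ^{S×S} with M_{pq} = ⟨D_h C̄_p, C̄_q D_h⟩_F, and w⁽¹⁾, w⁽²⁾ ∈ Σ_S. Write C̃(w) = ∑_{s=1}^S w_s C̄_s. Then the diagonal matrix D_h belongs to U(h,h), and evaluating the Gromov–Wasserstein objective at the coupling T = D_h gives exactly the squared Mahalanobis distance between embeddings: E(C̃(w⁽¹⁾), C̃(w⁽²⁾), D_h) = (w⁽¹⁾ − w⁽²⁾)ᵀ M (w⁽¹⁾ − w⁽²⁾). -/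
open Matrix BigOperators Finset

/-- The probability simplex in `ℝ^n`. -/
def probSimplex (n : ℕ) : Set (Fin n → ℝ) :=
  {h | (∀ i, 0 ≤ h i) ∧ ∑ i, h i = 1}

/-- The set of couplings between two histograms. -/
def couplings {n m : ℕ} (h1 : Fin n → ℝ) (h2 : Fin m → ℝ) :
    Set (Matrix (Fin n) (Fin m) ℝ) :=
  {T | (∀ i j, 0 ≤ T i j) ∧ (∀ i, ∑ j, T i j = h1 i) ∧ (∀ j, ∑ i, T i j = h2 j)}

/-- The Gromov–Wasserstein objective `E(C1, C2, T)`. -/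
def gwObj {n m : ℕ} (C1 : Matrix (Fin n) (Fin n) ℝ) (C2 : Matrix (Fin m) (Fin m) ℝ)
    (T : Matrix (Fin n) (Fin m) ℝ) : ℝ :=
  ∑ i, ∑ j, ∑ k, ∑ l, (C1 i j - C2 k l) ^ 2 * T i k * T j l

/-- The squared Gromov–Wasserstein distance (minimum of the objective over couplings). -/
noncomputable def GW2sq {n m : ℕ} (C1 : Matrix (Fin n) (Fin n) ℝ)
    (C2 : Matrix (Fin m) (Fin m) ℝ) (h1 : Fin n → ℝ) (h2 : Fin m → ℝ) : ℝ :=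
  sInf (gwObj C1 C2 '' couplings h1 h2)

/-- Frobenius inner product `⟨A, B⟩_F = tr(Aᵀ B)`. -/
def frob {n m : ℕ} (A B : Matrix (Fin n) (Fin m) ℝ) : ℝ :=
  Matrix.trace (Aᵀ * B)

/-!
At `T = D_h` the only terms of the objective that survive are those with `k = i` and `l = j`, so
`E(C₁, C₂, D_h) = ⟨D_h (C₁ - C₂), (C₁ - C₂) D_h⟩_F`. This is the quadratic form of the bilinear form
`(A, B) ↦ ⟨D_h A, B D_h⟩_F` at `C₁ - C₂`, and `M` is its Gram matrix on the atoms `C̄ₛ`.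
-/

theorem diagonal_mem_couplings_iff {n : ℕ} {h : Fin n → ℝ} :
    diagonal h ∈ couplings h h ↔ ∀ i, 0 ≤ h i := by
  refine ⟨fun hmem i => by simpa only [diagonal_apply_eq] using hmem.1 i i, fun hnonneg => ?_⟩
  refine ⟨fun i j => ?_, fun i => ?_, fun j => ?_⟩
  · rw [diagonal_apply]
    split_ifs
    exacts [hnonneg i, le_rfl]
  · simp [diagonal_apply]
  · simp [diagonal_apply]

theorem gwObj_diagonal {n : ℕ} (C1 C2 : Matrix (Fin n) (Fin n) ℝ) (h : Fin n → ℝ) :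
    gwObj C1 C2 (diagonal h) = ∑ i, ∑ j, h i * h j * (C1 i j - C2 i j) ^ 2 := by
  simp only [gwObj, diagonal_apply, mul_ite, ite_mul, mul_zero, zero_mul, sum_ite_eq, mem_univ,
    if_true]
  refine sum_congr rfl fun i _ => sum_congr rfl fun j _ => ?_
  ring

theorem frob_diagonal_mul_mul_diagonal {n m : ℕ} (g : Fin n → ℝ) (h : Fin m → ℝ)
    (A B : Matrix (Fin n) (Fin m) ℝ) :
    frob (diagonal g * A) (B * diagonal h) = ∑ i, ∑ j, g i * h j * (A i j * B i j) := by
  simp only [frob, trace, diag_apply, mul_apply (M := (diagonal g * A)ᵀ), transpose_apply,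
    diagonal_mul, mul_diagonal]
  rw [sum_comm]
  refine sum_congr rfl fun i _ => sum_congr rfl fun j _ => ?_
  ring

theorem gwObj_diagonal_eq_frob {n : ℕ} (C1 C2 : Matrix (Fin n) (Fin n) ℝ) (h : Fin n → ℝ) :
    gwObj C1 C2 (diagonal h) = frob (diagonal h * (C1 - C2)) ((C1 - C2) * diagonal h) := by
  simp only [gwObj_diagonal, frob_diagonal_mul_mul_diagonal, Matrix.sub_apply, sq]

theorem frob_sum_smul_sum_smul {ι κ : Type*} [Fintype ι] [Fintype κ] {n m : ℕ}
    (a : ι → ℝ) (b : κ → ℝ) (A : ι → Matrix (Fin n) (Fin m) ℝ)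
    (B : κ → Matrix (Fin n) (Fin m) ℝ) :
    frob (∑ p, a p • A p) (∑ q, b q • B q) = ∑ p, ∑ q, a p * frob (A p) (B q) * b q := by
  simp only [frob, Matrix.transpose_sum, transpose_smul, Matrix.sum_mul, Matrix.mul_sum, trace_sum,
    Matrix.smul_mul, Matrix.mul_smul, trace_smul, smul_eq_mul, mul_sum]
  rw [sum_comm]
  refine sum_congr rfl fun p _ => sum_congr rfl fun q _ => ?_
  ring

theorem gw_objective_at_diagonal_coupling_general {ι : Type*} [Fintype ι] {N : ℕ}
    (Cbar : ι → Matrix (Fin N) (Fin N) ℝ) (h : Fin N → ℝ) (M : Matrix ι ι ℝ)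
    (hM : ∀ p q, M p q = frob (diagonal h * Cbar p) (Cbar q * diagonal h)) (w1 w2 : ι → ℝ) :
    (diagonal h ∈ couplings h h ↔ ∀ i, 0 ≤ h i) ∧
    gwObj (∑ s, w1 s • Cbar s) (∑ s, w2 s • Cbar s) (diagonal h)
      = ∑ p, ∑ q, (w1 p - w2 p) * M p q * (w1 q - w2 q) := by
  refine ⟨diagonal_mem_couplings_iff, ?_⟩
  have hdiff : ∑ s, w1 s • Cbar s - ∑ s, w2 s • Cbar s = ∑ s, (w1 s - w2 s) • Cbar s := by
    simp only [sub_smul, sum_sub_distrib]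
  rw [gwObj_diagonal_eq_frob, hdiff]
  simp only [Matrix.mul_sum, Matrix.sum_mul, Matrix.mul_smul, Matrix.smul_mul,
    frob_sum_smul_sum_smul, hM]

/-- The diagonal coupling D_h is admissible, and the GW objective at D_h equals the
squared Mahalanobis distance between the embeddings. -/
theorem gw_objective_at_diagonal_coupling {N S : ℕ}
    (Cbar : Fin S → Matrix (Fin N) (Fin N) ℝ) (hsym : ∀ s, (Cbar s).IsSymm)
    (h : Fin N → ℝ) (hh : h ∈ probSimplex N)
    (M : Matrix (Fin S) (Fin S) ℝ)
    (hM : ∀ p q, M p q = frob (Matrix.diagonal h * Cbar p) (Cbar q * Matrix.diagonal h))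
    (w1 w2 : Fin S → ℝ) (hw1 : w1 ∈ probSimplex S) (hw2 : w2 ∈ probSimplex S) :
    Matrix.diagonal h ∈ couplings h h ∧
    gwObj (∑ s, w1 s • Cbar s) (∑ s, w2 s • Cbar s) (Matrix.diagonal h)
      = ∑ p, ∑ q, (w1 p - w2 p) * M p q * (w1 q - w2 q) :=
  (gw_objective_at_diagonal_coupling_general Cbar h M hM w1 w2).imp_left fun hiff => hiff.2 hh.1
end

section
/- Let C1 ∈ ℝ^{n×n} and C2 ∈ ℝ^{m×m} be symmetric, h1 ∈ Σ_n, h2 ∈ Σ_m, and let T* ∈ U(h1,h2) satisfy E(C1,C2,T*) ≤ E(C1,C2,T) for all T ∈ U(h1,h2) (i.e., T* is an optimal Gromov–Wasserstein coupling). Define the cost matrix M(T*) ∈ ℝ^{n×m} by M(T*)_{ij} = ∑_{k,l} (C1_{ik} − C2_{jl})² T*_{kl}. Then T* is also optimal for the linearized problem: for every T ∈ U(h1,h2), ⟨M(T*), T*⟩_F ≤ ⟨M(T*), T⟩_F. -/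
open Matrix BigOperators Finset

/-!
With the symmetric bilinear form `B S T = ⟨M(S), T⟩_F`, the Gromov–Wasserstein objective is the
quadratic form `E(T) = B T T`. Moving from a minimizer `T*` towards another coupling `T` gives
`E(T* + t (T - T*)) = E(T*) + t (2 B T* (T - T*) + t E(T - T*))`, so the first-order coefficient
`2 (⟨M(T*), T⟩_F - ⟨M(T*), T*⟩_F)` is nonnegative.
-/

section FirstOrderCondition

open Filter Topology

lemma bilinForm_apply_add_smul_self {R E : Type*} [CommRing R] [AddCommGroup E] [Module R E]
    {B : LinearMap.BilinForm R E} (hB : B.IsSymm) (x v : E) (t : R) :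
    B (x + t • v) (x + t • v) = B x x + t * (2 * B x v + t * B v v) := by
  simp only [map_add, map_smul, LinearMap.add_apply, LinearMap.smul_apply, smul_eq_mul, hB.eq v x]
  ring

lemma nonneg_of_eventually_nonneg_mul_add_mul {b c : ℝ}
    (h : ∀ᶠ t in 𝓝[>] (0 : ℝ), 0 ≤ t * (b + t * c)) : 0 ≤ b := by
  have hlim : Tendsto (fun t : ℝ ↦ b + t * c) (𝓝[>] 0) (𝓝 b) :=
    tendsto_nhdsWithin_of_tendsto_nhds (Continuous.tendsto' (by fun_prop) 0 b (by simp))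
  refine ge_of_tendsto hlim ?_
  filter_upwards [h, self_mem_nhdsWithin] with t ht htpos
  exact nonneg_of_mul_nonneg_right ht htpos

variable {E : Type*} [AddCommGroup E] [Module ℝ E] [TopologicalSpace E] [ContinuousAdd E]
  [ContinuousSMul ℝ E] {s : Set E} {x y : E}

lemma tendsto_add_smul_sub_nhdsWithin_of_starConvex (hs : StarConvex ℝ x s) (hy : y ∈ s) :
    Tendsto (fun t : ℝ ↦ x + t • (y - x)) (𝓝[>] 0) (𝓝[s] x) := by
  refine tendsto_nhdsWithin_iff.mpr ⟨?_, ?_⟩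
  · exact tendsto_nhdsWithin_of_tendsto_nhds (Continuous.tendsto' (by fun_prop) 0 x (by simp))
  · filter_upwards [Ioc_mem_nhdsGT one_pos] with t ht
    exact hs.add_smul_sub_mem hy ht.1.le ht.2

theorem bilinForm_apply_self_le_of_isLocalMinOn {B : LinearMap.BilinForm ℝ E} (hB : B.IsSymm)
    (hs : StarConvex ℝ x s) (hx : IsLocalMinOn (fun z ↦ B z z) s x) (hy : y ∈ s) :
    B x x ≤ B x y := by
  have hincr : ∀ᶠ t in 𝓝[>] (0 : ℝ), 0 ≤ t * (2 * B x (y - x) + t * B (y - x) (y - x)) := by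
    filter_upwards [(tendsto_add_smul_sub_nhdsWithin_of_starConvex hs hy).eventually hx] with t ht
    rwa [bilinForm_apply_add_smul_self hB, le_add_iff_nonneg_right] at ht
  have hslope : 0 ≤ 2 * B x (y - x) := nonneg_of_eventually_nonneg_mul_add_mul hincr
  rw [map_sub] at hslope
  linarith

end FirstOrderCondition

section GromovWasserstein

variable {n m : ℕ}

lemma convex_couplings (h1 : Fin n → ℝ) (h2 : Fin m → ℝ) : Convex ℝ (couplings h1 h2) := by
  rintro S ⟨hS, hSrow, hScol⟩ T ⟨hT, hTrow, hTcol⟩ a b ha hb hab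
  refine ⟨fun i j ↦ ?_, fun i ↦ ?_, fun j ↦ ?_⟩
  · exact add_nonneg (mul_nonneg ha (hS i j)) (mul_nonneg hb (hT i j))
  · simp [sum_add_distrib, ← mul_sum, hSrow, hTrow, ← add_mul, hab]
  · simp [sum_add_distrib, ← mul_sum, hScol, hTcol, ← add_mul, hab]

lemma frob_eq_sum (A B : Matrix (Fin n) (Fin m) ℝ) : frob A B = ∑ i, ∑ j, A i j * B i j := by
  rw [frob, trace_mul_comm, ← sum_hadamard_eq]
  simp only [hadamard_apply, mul_comm]

/-- The linearized cost `M(T)`, as a linear function of the coupling `T`; for symmetric `C1` and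
`C2` it is half the gradient of `gwObj C1 C2` at `T`. -/
def gwCost (C1 : Matrix (Fin n) (Fin n) ℝ) (C2 : Matrix (Fin m) (Fin m) ℝ) :
    Matrix (Fin n) (Fin m) ℝ →ₗ[ℝ] Matrix (Fin n) (Fin m) ℝ where
  toFun T := of fun i j ↦ ∑ k, ∑ l, (C1 i k - C2 j l) ^ 2 * T k l
  map_add' S T := by ext; simp [mul_add, sum_add_distrib]
  map_smul' c T := by ext; simp [mul_sum, mul_left_comm]

/-- The bilinear form `(S, T) ↦ ⟨M(S), T⟩_F`, whose quadratic form is `gwObj C1 C2`. -/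
def gwForm (C1 : Matrix (Fin n) (Fin n) ℝ) (C2 : Matrix (Fin m) (Fin m) ℝ) :
    LinearMap.BilinForm ℝ (Matrix (Fin n) (Fin m) ℝ) :=
  LinearMap.mk₂ ℝ (fun S T ↦ frob (gwCost C1 C2 S) T)
    (by simp [frob, Matrix.add_mul]) (by simp [frob])
    (by simp [frob, Matrix.mul_add]) (by simp [frob])

variable {C1 : Matrix (Fin n) (Fin n) ℝ} {C2 : Matrix (Fin m) (Fin m) ℝ}

lemma gwForm_apply (S T : Matrix (Fin n) (Fin m) ℝ) :
    gwForm C1 C2 S T = frob (gwCost C1 C2 S) T :=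
  rfl

lemma gwForm_eq_sum (S T : Matrix (Fin n) (Fin m) ℝ) :
    gwForm C1 C2 S T = ∑ i, ∑ j, ∑ k, ∑ l, (C1 i j - C2 k l) ^ 2 * T i k * S j l := by
  simp only [gwForm_apply, frob_eq_sum, gwCost, LinearMap.coe_mk, AddHom.coe_mk, of_apply, sum_mul,
    mul_right_comm]
  exact sum_congr rfl fun i _ ↦ sum_comm

lemma gwForm_self (T : Matrix (Fin n) (Fin m) ℝ) : gwForm C1 C2 T T = gwObj C1 C2 T :=
  gwForm_eq_sum T T

lemma isSymm_gwForm (hC1 : C1.IsSymm) (hC2 : C2.IsSymm) : (gwForm C1 C2).IsSymm where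
  eq S T := by
    rw [gwForm_eq_sum, gwForm_eq_sum, sum_comm]
    refine sum_congr rfl fun i _ ↦ sum_congr rfl fun j _ ↦ ?_
    rw [sum_comm]
    simp only [hC1.apply i j, hC2.apply, mul_right_comm]

theorem gw_optimal_is_linearized_optimal_general (hC1 : C1.IsSymm) (hC2 : C2.IsSymm)
    {K : Set (Matrix (Fin n) (Fin m) ℝ)} {Tstar : Matrix (Fin n) (Fin m) ℝ}
    (hK : StarConvex ℝ Tstar K) (hopt : IsLocalMinOn (gwObj C1 C2) K Tstar) :
    ∀ T ∈ K, frob (gwCost C1 C2 Tstar) Tstar ≤ frob (gwCost C1 C2 Tstar) T := by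
  intro T hT
  have hmin : IsLocalMinOn (fun S ↦ gwForm C1 C2 S S) K Tstar := by simpa only [gwForm_self]
  simpa only [gwForm_apply] using
    bilinForm_apply_self_le_of_isLocalMinOn (isSymm_gwForm hC1 hC2) hK hmin hT

end GromovWasserstein

/-- An optimal GW coupling is also optimal for the linearized problem with cost M(T*). -/
theorem gw_optimal_is_linearized_optimal {n m : ℕ}
    (C1 : Matrix (Fin n) (Fin n) ℝ) (hC1 : C1.IsSymm)
    (C2 : Matrix (Fin m) (Fin m) ℝ) (hC2 : C2.IsSymm)
    (h1 : Fin n → ℝ) (h2 : Fin m → ℝ)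
    (hh1 : h1 ∈ probSimplex n) (hh2 : h2 ∈ probSimplex m)
    (Tstar : Matrix (Fin n) (Fin m) ℝ) (hTstar : Tstar ∈ couplings h1 h2)
    (hopt : ∀ T ∈ couplings h1 h2, gwObj C1 C2 Tstar ≤ gwObj C1 C2 T)
    (M : Matrix (Fin n) (Fin m) ℝ)
    (hM : ∀ i j, M i j = ∑ k, ∑ l, (C1 i k - C2 j l) ^ 2 * Tstar k l) :
    ∀ T ∈ couplings h1 h2, frob M Tstar ≤ frob M T := by
  obtain rfl : M = gwCost C1 C2 Tstar := Matrix.ext hM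
  exact gw_optimal_is_linearized_optimal_general hC1 hC2 (convex_couplings h1 h2 hTstar)
    (IsMinOn.localize hopt)
end
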